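/- For every pair of fixed integers d ≥ 0 and m ≥ 1, as the integer b → ∞ (with b > d), the complementary moment satisfies v_{0;m}(b,d) = b/(m+1) + (d + 1/2)m/b − ((d² + d + 1/3)·m(m−1)/2 − (d + 1/2))/b² + O(b⁻³), the implied constant depending on d and m. -/

import Mathlib

open Filter Asymptotics

/-- The `m`-th complementary moment of the Irwin measure:
`v_{k;m}(b,d) = ∑_{l≥0} b^{-l(m+1)} ∑_{n=0}^{b^l-1} [n has exactly k base-b digits d
(padded to length l)] · (b^l - n)^m`. -/
noncomputable def momentV (b d k m : ℕ) : ℝ :=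
  ∑' l : ℕ, ((b : ℝ) ^ (l * (m + 1)))⁻¹ *
    ∑ n ∈ Finset.range (b ^ l),
      (if ((Finset.range l).filter fun i => n / b ^ i % b = d).card = k
        then ((b : ℝ) ^ l - n) ^ m else 0)

/-- Level-`l` functional, defined recursively on the leading digit. -/
noncomputable def irwinT (b d : ℕ) : ℕ → ((ℝ → ℝ) →ₗ[ℝ] ℝ)
  | 0 => LinearMap.proj (1 : ℝ)
  | l + 1 => ((b : ℝ)⁻¹) • ∑ a ∈ (Finset.range b).erase d,
      (irwinT b d l) ∘ₗ LinearMap.funLeft ℝ ℝ (fun y : ℝ => ((b : ℝ) - 1 - a + y) / b)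

lemma irwinT_zero (b d : ℕ) (f : ℝ → ℝ) : irwinT b d 0 f = f 1 := rfl

lemma irwinT_succ (b d l : ℕ) (f : ℝ → ℝ) : irwinT b d (l + 1) f =
    (b : ℝ)⁻¹ * ∑ a ∈ (Finset.range b).erase d,
      irwinT b d l (fun y => f (((b : ℝ) - 1 - a + y) / b)) := by
  simp [irwinT, LinearMap.funLeft, Function.comp_def]

lemma irwinT_bound (b d : ℕ) (hd : d < b) (l : ℕ) : ∀ (f : ℝ → ℝ) (C : ℝ),
    (∀ y, 0 ≤ y → y ≤ 1 → |f y| ≤ C) →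
    |irwinT b d l f| ≤ C * (((b : ℝ) - 1) / b) ^ l := by
  have hb : (0 : ℝ) < b := by exact_mod_cast (by omega : 0 < b)
  induction l with
  | zero => intro f C h; simpa [irwinT_zero] using h 1 (by norm_num) (by norm_num)
  | succ l ih =>
    intro f C h
    rw [irwinT_succ, abs_mul, abs_of_pos (inv_pos.mpr hb)]
    have h1 : ∀ a ∈ (Finset.range b).erase d,
        |irwinT b d l (fun y => f (((b : ℝ) - 1 - a + y) / b))|
          ≤ C * (((b : ℝ) - 1) / b) ^ l := by
      intro a ha
      apply ih
      intro y hy0 hy1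
      have hab : a + 1 ≤ b := by simp at ha; omega
      have hab' : (a : ℝ) + 1 ≤ b := by exact_mod_cast hab
      apply h
      · apply div_nonneg _ hb.le; linarith
      · rw [div_le_one hb]
        have : (0 : ℝ) ≤ a := Nat.cast_nonneg a
        linarith
    have h2 := (Finset.abs_sum_le_sum_abs _ _).trans (Finset.sum_le_sum h1)
    rw [Finset.sum_const, Finset.card_erase_of_mem (by simpa using hd), Finset.card_range,
      nsmul_eq_mul, Nat.cast_sub (by omega)] at h2
    calc _ ≤ (b : ℝ)⁻¹ * (((b : ℝ) - (1 : ℕ)) * (C * (((b : ℝ) - 1) / b) ^ l)) := by gcongr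
      _ = _ := by rw [pow_succ]; push_cast; field_simp

lemma irwin_geom (b : ℕ) (hb : 2 ≤ b) :
    HasSum (fun l : ℕ => (((b : ℝ) - 1) / b) ^ l) b := by
  have hb' : (2 : ℝ) ≤ b := by exact_mod_cast hb
  have h := hasSum_geometric_of_lt_one (r := ((b : ℝ) - 1) / b)
    (div_nonneg (by linarith) (by linarith)) (by rw [div_lt_one (by linarith)]; linarith)
  convert h using 1
  field_simp
  ring

/-- The functional. -/
noncomputable def irwinL (b d : ℕ) (f : ℝ → ℝ) : ℝ := ∑' l, irwinT b d l f

lemma cont_bdd (f : ℝ → ℝ) (hf : Continuous f) :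
    ∃ C, ∀ y, 0 ≤ y → y ≤ 1 → |f y| ≤ C := by
  obtain ⟨C, hC⟩ := (isCompact_Icc (a := (0 : ℝ)) (b := 1)).exists_bound_of_continuousOn
    hf.continuousOn
  exact ⟨C, fun y h0 h1 => hC y ⟨h0, h1⟩⟩

lemma irwin_summable (b d : ℕ) (hb : 2 ≤ b) (hd : d < b) (f : ℝ → ℝ) (hf : Continuous f) :
    Summable fun l => irwinT b d l f := by
  obtain ⟨C, hC⟩ := cont_bdd f hf
  exact Summable.of_norm_bounded ((irwin_geom b hb).summable.mul_left C)
    (fun l => irwinT_bound b d hd l f C hC)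

lemma irwinL_bound (b d : ℕ) (hb : 2 ≤ b) (hd : d < b) (f : ℝ → ℝ) (C : ℝ)
    (hC : ∀ y, 0 ≤ y → y ≤ 1 → |f y| ≤ C) : |irwinL b d f| ≤ C * b := by
  unfold irwinL
  rw [← Real.norm_eq_abs]
  exact tsum_of_norm_bounded ((irwin_geom b hb).mul_left C)
    (fun l => irwinT_bound b d hd l f C hC)

lemma irwinL_add (b d : ℕ) (hb : 2 ≤ b) (hd : d < b) (f g : ℝ → ℝ) (hf : Continuous f)
    (hg : Continuous g) :
    irwinL b d (fun y => f y + g y) = irwinL b d f + irwinL b d g := by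
  unfold irwinL
  rw [← (irwin_summable b d hb hd f hf).tsum_add (irwin_summable b d hb hd g hg)]
  exact tsum_congr fun l => map_add (irwinT b d l) f g

lemma irwinL_sub (b d : ℕ) (hb : 2 ≤ b) (hd : d < b) (f g : ℝ → ℝ) (hf : Continuous f)
    (hg : Continuous g) :
    irwinL b d (fun y => f y - g y) = irwinL b d f - irwinL b d g := by
  unfold irwinL
  rw [← (irwin_summable b d hb hd f hf).tsum_sub (irwin_summable b d hb hd g hg)]
  exact tsum_congr fun l => map_sub (irwinT b d l) f g

lemma irwinL_smul (b d : ℕ) (c : ℝ) (f : ℝ → ℝ) :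
    irwinL b d (fun y => c * f y) = c * irwinL b d f := by
  unfold irwinL
  rw [← tsum_mul_left]
  exact tsum_congr fun l => map_smul (irwinT b d l) c f

lemma irwinL_sum (b d : ℕ) (hb : 2 ≤ b) (hd : d < b) {ι : Type} (s : Finset ι) (f : ι → ℝ → ℝ)
    (hf : ∀ i, Continuous (f i)) :
    irwinL b d (fun y => ∑ i ∈ s, f i y) = ∑ i ∈ s, irwinL b d (f i) := by
  unfold irwinL
  rw [← Summable.tsum_finsetSum fun i _ => irwin_summable b d hb hd (f i) (hf i)]
  refine tsum_congr fun l => ?_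
  rw [← map_sum]
  congr 1
  ext y
  simp

lemma irwinL_one (b d : ℕ) (hb : 2 ≤ b) (hd : d < b) : irwinL b d (fun _ => 1) = b := by
  unfold irwinL
  rw [← (irwin_geom b hb).tsum_eq]
  refine tsum_congr fun l => ?_
  have hb0 : (b : ℝ) ≠ 0 := by exact_mod_cast (by omega : b ≠ 0)
  induction l with
  | zero => simp [irwinT_zero]
  | succ l ih =>
    rw [irwinT_succ, ih, Finset.sum_const, Finset.card_erase_of_mem (by simpa using hd),
      Finset.card_range, nsmul_eq_mul, Nat.cast_sub (by omega), pow_succ]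
    push_cast
    field_simp

lemma irwinL_const (b d : ℕ) (hb : 2 ≤ b) (hd : d < b) (c : ℝ) :
    irwinL b d (fun _ => c) = c * b := by
  rw [← irwinL_one b d hb hd, ← irwinL_smul]; simp

/-- Fundamental recursion. -/
lemma irwinL_rec (b d : ℕ) (hb : 2 ≤ b) (hd : d < b) (g : ℝ → ℝ) (hg : Continuous g) :
    irwinL b d g = g 1
      + (b : ℝ)⁻¹ * irwinL b d (fun y => ∑ a ∈ Finset.range b, g (y / b + a / b))
      - (b : ℝ)⁻¹ * irwinL b d (fun y => g (1 - (d + 1 - y) / b)) := by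
  have hb0 : (b : ℝ) ≠ 0 := by exact_mod_cast (by omega : b ≠ 0)
  have h1 : irwinL b d g = g 1 + (b : ℝ)⁻¹ * ∑ a ∈ (Finset.range b).erase d,
      irwinL b d (fun y => g (((b : ℝ) - 1 - a + y) / b)) := by
    conv_lhs => unfold irwinL
    rw [(irwin_summable b d hb hd g hg).tsum_eq_zero_add, irwinT_zero]
    simp_rw [irwinT_succ]
    rw [tsum_mul_left, Summable.tsum_finsetSum]
    · rfl
    · intro a _
      exact irwin_summable b d hb hd _ (by fun_prop)
  have h2 : ∑ a ∈ (Finset.range b).erase d,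
      irwinL b d (fun y => g (((b : ℝ) - 1 - a + y) / b)) =
      ∑ a ∈ Finset.range b, irwinL b d (fun y => g (((b : ℝ) - 1 - a + y) / b))
      - irwinL b d (fun y => g (1 - (d + 1 - y) / b)) := by
    rw [← Finset.add_sum_erase (Finset.range b) _ (Finset.mem_range.mpr hd)]
    have : (fun y : ℝ => g (((b : ℝ) - 1 - d + y) / b)) = fun y => g (1 - (d + 1 - y) / b) := by
      ext y; congr 1; field_simp; ring
    rw [this]; ring
  have h3 : ∑ a ∈ Finset.range b, irwinL b d (fun y => g (((b : ℝ) - 1 - a + y) / b)) =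
      irwinL b d (fun y => ∑ a ∈ Finset.range b, g (y / b + a / b)) := by
    rw [irwinL_sum b d hb hd _ (fun (a : ℕ) y => g (y / b + a / b)) (fun a => by fun_prop),
      ← Finset.sum_range_reflect]
    refine Finset.sum_congr rfl fun a ha => ?_
    have ha' : a + 1 ≤ b := by simp at ha; omega
    congr 1; ext y; congr 1
    rw [Nat.sub_sub, Nat.cast_sub (by omega)]
    push_cast; field_simp; ring
  rw [h1, h2, h3]; ring

lemma sum_range_mul_split (b c : ℕ) (F : ℕ → ℝ) :
    ∑ n ∈ Finset.range (b * c), F n =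
      ∑ a ∈ Finset.range b, ∑ n ∈ Finset.range c, F (a * c + n) := by
  induction b with
  | zero => simp
  | succ b ih => rw [Finset.sum_range_succ, ← ih, Nat.succ_mul, Finset.sum_range_add]

lemma digit_shift (b l a n i : ℕ) (hb : 0 < b) (hi : i < l) :
    (a * b ^ l + n) / b ^ i % b = n / b ^ i % b := by
  obtain ⟨j, rfl⟩ := Nat.exists_eq_add_of_lt hi
  have : a * b ^ (i + j + 1) + n = n + b ^ i * (b * (a * b ^ j)) := by ring
  rw [this, Nat.add_mul_div_left _ _ (by positivity), Nat.add_mul_mod_self_left]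

lemma digit_top (b l a n : ℕ) (hn : n < b ^ l) (ha : a < b) :
    (a * b ^ l + n) / b ^ l % b = a := by
  have : a * b ^ l + n = n + b ^ l * a := by ring
  rw [this, Nat.add_mul_div_left _ _ (by omega), Nat.div_eq_of_lt hn, zero_add, Nat.mod_eq_of_lt ha]

lemma irwinT_eq (b d : ℕ) (hb : 2 ≤ b) (l : ℕ) : ∀ f : ℝ → ℝ, irwinT b d l f =
    ((b : ℝ) ^ l)⁻¹ * ∑ n ∈ Finset.range (b ^ l),
      (if ((Finset.range l).filter fun i => n / b ^ i % b = d).card = 0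
        then f (((b : ℝ) ^ l - n) / (b : ℝ) ^ l) else 0) := by
  have hb0 : (b : ℝ) ≠ 0 := by exact_mod_cast (by omega : b ≠ 0)
  induction l with
  | zero => intro f; simp [irwinT_zero]
  | succ l ih =>
    intro f
    rw [irwinT_succ]
    simp_rw [ih]
    rw [pow_succ' b l, sum_range_mul_split, ← Finset.mul_sum, ← mul_assoc, ← mul_inv,
      ← pow_succ']
    congr 1
    rw [← Finset.sum_subset (Finset.erase_subset d (Finset.range b))]
    · refine Finset.sum_congr rfl fun a ha => Finset.sum_congr rfl fun n hn => ?_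
      simp only [Finset.mem_erase, Finset.mem_range] at ha hn
      have hc : (((Finset.range (l + 1)).filter
            fun i => (a * b ^ l + n) / b ^ i % b = d).card = 0) ↔
          (((Finset.range l).filter fun i => n / b ^ i % b = d).card = 0) := by
        simp only [Finset.card_eq_zero, Finset.filter_eq_empty_iff, Finset.mem_range]
        constructor
        · intro h i hi
          have := h (x := i) (by omega)
          rwa [digit_shift b l a n i (by omega) hi] at this
        · intro h i hi
          rcases Nat.lt_succ_iff_lt_or_eq.mp hi with h1 | h1
          · rw [digit_shift b l a n i (by omega) h1]; exact h h1
          · rw [h1, digit_top b l a n hn ha.2]; exact ha.1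
      simp only [hc]
      congr 2
      push_cast
      field_simp
      ring
    · intro a ha had
      have had' : a = d := by
        by_contra h; exact had (Finset.mem_erase.mpr ⟨h, ha⟩)
      subst had'
      refine Finset.sum_eq_zero fun n hn => ?_
      simp only [Finset.mem_range] at ha hn
      rw [if_neg]
      intro h
      simp only [Finset.card_eq_zero, Finset.filter_eq_empty_iff, Finset.mem_range] at h
      exact h (x := l) (by omega) (digit_top b l a n hn ha)

lemma momentV_eq (b d m : ℕ) (hb : 2 ≤ b) :
    momentV b d 0 m = irwinL b d (fun y => y ^ m) := by
  have hb0 : (b : ℝ) ≠ 0 := by exact_mod_cast (by omega : b ≠ 0)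
  unfold momentV irwinL
  refine tsum_congr fun l => ?_
  rw [irwinT_eq b d hb, Finset.mul_sum, Finset.mul_sum]
  refine Finset.sum_congr rfl fun n _ => ?_
  split_ifs
  · rw [div_pow, ← pow_mul, mul_add, mul_one, pow_add, mul_inv, div_eq_mul_inv]; ring
  · simp

lemma bern_lip (k : ℕ) : ∃ K, 0 ≤ K ∧ ∀ t : ℝ, 0 ≤ t → t ≤ 1 →
    |bernoulliFun k (1 - t) - bernoulliFun k 1| ≤ K * t := by
  obtain ⟨C, hC⟩ := cont_bdd (fun x => k * bernoulliFun (k - 1) x)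
    (continuous_const.mul (continuous_bernoulliFun _))
  refine ⟨C, (abs_nonneg _).trans (hC 0 le_rfl zero_le_one), fun t h0 h1 => ?_⟩
  have := (convex_Icc (0 : ℝ) 1).norm_image_sub_le_of_norm_hasDerivWithin_le
    (f := bernoulliFun k) (f' := fun x => k * bernoulliFun (k - 1) x) (C := C)
    (x := 1) (y := 1 - t)
    (fun x _ => (hasDerivAt_bernoulliFun k x).hasDerivWithinAt)
    (fun x hx => hC x hx.1 hx.2) (by simp) (by constructor <;> linarith)
  simpa [abs_of_nonneg h0] using this

lemma pow_taylor (m : ℕ) : ∃ K, 0 ≤ K ∧ ∀ t : ℝ, 0 ≤ t → t ≤ 1 →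
    |(1 - t) ^ m - (1 - m * t + m * (m - 1) / 2 * t ^ 2)| ≤ K * t ^ 3 := by
  induction m with
  | zero => exact ⟨0, le_rfl, fun t _ _ => by simp⟩
  | succ m ih =>
    obtain ⟨K, hK, h⟩ := ih
    refine ⟨K + |(m : ℝ) * (m - 1) / 2|, by positivity, fun t h0 h1 => ?_⟩
    have e : (1 - t) ^ (m + 1) - (1 - ((m + 1 : ℕ) : ℝ) * t
        + ((m + 1 : ℕ) : ℝ) * (((m + 1 : ℕ) : ℝ) - 1) / 2 * t ^ 2)
        = (1 - t) * ((1 - t) ^ m - (1 - m * t + m * (m - 1) / 2 * t ^ 2))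
          - (m * (m - 1) / 2) * t ^ 3 := by
      push_cast; ring
    rw [e]
    refine (abs_sub _ _).trans ?_
    rw [abs_mul, abs_mul, abs_of_nonneg (by linarith : 0 ≤ 1 - t),
      abs_of_nonneg (by positivity : 0 ≤ t ^ 3), add_mul]
    have := h t h0 h1
    refine add_le_add ?_ le_rfl
    calc _ ≤ 1 * |(1 - t) ^ m - (1 - m * t + m * (m - 1) / 2 * t ^ 2)| := by
          gcongr; linarith
      _ ≤ _ := by linarith

/-- Integral of the Bernoulli polynomial. -/
noncomputable def irwinB (d k b : ℕ) : ℝ := irwinL b d (bernoulliFun k)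

lemma t_range (b d : ℕ) (hd : d < b) (y : ℝ) (h0 : 0 ≤ y) (h1 : y ≤ 1) :
    0 ≤ ((d : ℝ) + 1 - y) / b ∧ ((d : ℝ) + 1 - y) / b ≤ 1 ∧
      ((d : ℝ) + 1 - y) / b ≤ (d + 1) / b := by
  have hb : (0 : ℝ) < b := by exact_mod_cast (by omega : 0 < b)
  have hdb : (d : ℝ) + 1 ≤ b := by exact_mod_cast hd
  have hd0 : (0 : ℝ) ≤ d := Nat.cast_nonneg d
  refine ⟨div_nonneg (by linarith) hb.le, ?_, ?_⟩
  · rw [div_le_one hb]; linarith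
  · gcongr; linarith

lemma mul_sum_bern (b d k : ℕ) (hb : 2 ≤ b) :
    irwinL b d (fun y => ∑ a ∈ Finset.range b, bernoulliFun k (y / b + a / b)) =
      b / (b : ℝ) ^ k * irwinB d k b := by
  have hb0 : (b : ℝ) ≠ 0 := by exact_mod_cast (by omega : b ≠ 0)
  rw [irwinB, ← irwinL_smul]
  congr 1
  ext y
  have := bernoulliFun_mul k (by omega : b ≠ 0) (y / b)
  rw [mul_div_cancel₀ _ hb0] at this
  rw [this]
  field_simp

lemma irwinB_rec (b d k : ℕ) (hb : 2 ≤ b) (hd : d < b) :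
    irwinB d k b = bernoulliFun k 1 + ((b : ℝ) ^ k)⁻¹ * irwinB d k b
      - (b : ℝ)⁻¹ * irwinL b d (fun y => bernoulliFun k (1 - (d + 1 - y) / b)) := by
  have hb0 : (b : ℝ) ≠ 0 := by exact_mod_cast (by omega : b ≠ 0)
  conv_lhs => rw [irwinB, irwinL_rec b d hb hd _ (continuous_bernoulliFun _), mul_sum_bern b d k hb]
  field_simp

lemma irwinB_bound (d k : ℕ) (hk : 1 ≤ k) : ∃ C, ∀ b : ℕ, 2 ≤ b → d < b →
    |irwinB d k b| ≤ C * (b : ℝ)⁻¹ := by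
  obtain ⟨K, hK, h⟩ := bern_lip k
  refine ⟨2 * (K * (d + 1)), fun b hb hd => ?_⟩
  have hb0 : (0 : ℝ) < b := by exact_mod_cast (by omega : 0 < b)
  have hb2 : (2 : ℝ) ≤ b := by exact_mod_cast hb
  have h1 := irwinL_bound b d hb hd
    (fun y => bernoulliFun k (1 - (d + 1 - y) / b) - bernoulliFun k 1) (K * ((d + 1) / b))
    (fun y y0 y1 => by
      obtain ⟨t0, t1, t2⟩ := t_range b d hd y y0 y1
      exact (h _ t0 t1).trans (by gcongr))
  have hc : Continuous (bernoulliFun k) := continuous_bernoulliFun k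
  rw [irwinL_sub b d hb hd _ _ (by fun_prop) continuous_const, irwinL_const b d hb hd] at h1
  have h2 := irwinB_rec b d k hb hd
  have h3 : (1 - ((b : ℝ) ^ k)⁻¹) * irwinB d k b = - ((b : ℝ)⁻¹ *
      (irwinL b d (fun y => bernoulliFun k (1 - (d + 1 - y) / b)) - bernoulliFun k 1 * b)) := by
    have : (b : ℝ)⁻¹ * (bernoulliFun k 1 * b) = bernoulliFun k 1 := by field_simp
    rw [mul_sub, this]; linarith
  have h4 : ((b : ℝ) ^ k)⁻¹ ≤ 1 / 2 := by
    rw [one_div]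
    apply inv_anti₀ (by norm_num)
    calc (2 : ℝ) ≤ b := hb2
      _ = (b : ℝ) ^ 1 := (pow_one _).symm
      _ ≤ (b : ℝ) ^ k := pow_le_pow_right₀ (by linarith) hk
  have h5 := congrArg abs h3
  rw [abs_neg, abs_mul, abs_mul, abs_of_pos (inv_pos.mpr hb0),
    abs_of_nonneg (by linarith : 0 ≤ 1 - ((b : ℝ) ^ k)⁻¹)] at h5
  have h6 : (b : ℝ)⁻¹ * |irwinL b d (fun y => bernoulliFun k (1 - (d + 1 - y) / b))
      - bernoulliFun k 1 * b| ≤ (b : ℝ)⁻¹ * (K * (d + 1)) := by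
    gcongr
    refine h1.trans (le_of_eq ?_)
    field_simp
  have h7 : 1 / 2 * |irwinB d k b| ≤ (1 - ((b : ℝ) ^ k)⁻¹) * |irwinB d k b| := by
    gcongr; linarith
  linarith

lemma pow_eq_bern (m : ℕ) (y : ℝ) : y ^ m =
    ∑ k ∈ Finset.range (m + 1), ((m + 1).choose k / (m + 1) : ℝ) * bernoulliFun k y := by
  have h := congrArg (fun p => (Polynomial.map (algebraMap ℚ ℝ) p).eval y)
    (Polynomial.sum_bernoulli m)
  simp only [Polynomial.map_sum, Polynomial.eval_finsetSum, Polynomial.map_smul,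
    Polynomial.eval_smul, Polynomial.map_monomial, Polynomial.eval_monomial] at h
  have hm : ((m : ℝ) + 1) ≠ 0 := by positivity
  simp only [smul_eq_mul, map_natCast, map_add, map_one] at h
  change (∑ k ∈ Finset.range (m + 1), ((m + 1).choose k : ℝ) * bernoulliFun k y) = _ at h
  simp_rw [div_mul_eq_mul_div]
  rw [← Finset.sum_div, h]
  field_simp

/-- Exact formula. -/
lemma moment_rec (b d m : ℕ) (hb : 2 ≤ b) (hd : d < b) :
    irwinL b d (fun y => y ^ m) = 1 +
      ∑ k ∈ Finset.range (m + 1), ((m + 1).choose k / (m + 1) : ℝ) *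
        (((b : ℝ) ^ k)⁻¹ * irwinB d k b)
      - (b : ℝ)⁻¹ * irwinL b d (fun y => (1 - (d + 1 - y) / b) ^ m) := by
  have hb0 : (b : ℝ) ≠ 0 := by exact_mod_cast (by omega : b ≠ 0)
  conv_lhs => rw [irwinL_rec b d hb hd _ (by fun_prop)]
  simp only [one_pow]
  congr 2
  have : (fun y : ℝ => ∑ a ∈ Finset.range b, (y / b + a / b) ^ m) = fun y =>
      ∑ k ∈ Finset.range (m + 1), ((m + 1).choose k / (m + 1) : ℝ) *
        ∑ a ∈ Finset.range b, bernoulliFun k (y / b + a / b) := by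
    ext y
    simp_rw [Finset.mul_sum]
    rw [Finset.sum_comm]
    exact Finset.sum_congr rfl fun a _ => pow_eq_bern m _
  have hc : ∀ k, Continuous (bernoulliFun k) := continuous_bernoulliFun
  rw [this, irwinL_sum b d hb hd _ (fun k y => ((m + 1).choose k / (m + 1) : ℝ) *
        ∑ a ∈ Finset.range b, bernoulliFun k (y / b + a / b))
        (fun k => continuous_const.mul (continuous_finsetSum _ fun a _ => (hc k).comp (by fun_prop))),
    Finset.mul_sum]
  refine Finset.sum_congr rfl fun k _ => ?_
  rw [irwinL_smul, mul_sum_bern b d k hb]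
  field_simp

lemma irwinB_zero (b d : ℕ) (hb : 2 ≤ b) (hd : d < b) : irwinB d 0 b = b := by
  rw [← irwinL_one b d hb hd, irwinB]; congr 1; ext y; simp

lemma v_one (b d : ℕ) (hb : 2 ≤ b) (hd : d < b) :
    irwinL b d (fun y => y) = b / 2 + irwinB d 1 b := by
  have : bernoulliFun 1 = fun y => y - 1 / 2 := by ext y; simp
  rw [irwinB, this, irwinL_sub b d hb hd _ _ (by fun_prop) (by fun_prop), irwinL_const b d hb hd]
  ring

lemma v_two (b d : ℕ) (hb : 2 ≤ b) (hd : d < b) :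
    irwinL b d (fun y => y ^ 2) = b / 3 + (irwinB d 1 b + irwinB d 2 b) := by
  have : bernoulliFun 2 = fun y => (y ^ 2 - y) + 6⁻¹ := by ext y; simp
  have h1 := v_one b d hb hd
  have h2 : irwinB d 2 b = irwinL b d (fun y => (y ^ 2 - y) + 6⁻¹) := by rw [irwinB, this]
  rw [ irwinL_add b d hb hd _ _ (by fun_prop) (by fun_prop),
    irwinL_sub b d hb hd _ _ (by fun_prop) (by fun_prop), irwinL_const b d hb hd] at h2
  linarith

lemma irwinB_one_rec (b d : ℕ) (hb : 2 ≤ b) (hd : d < b) :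
    irwinB d 1 b - (d + 1 / 2) * (b : ℝ)⁻¹ =
      irwinB d 1 b * (b : ℝ)⁻¹ - irwinB d 1 b * ((b : ℝ)⁻¹) ^ 2 := by
  have hb0 : (b : ℝ) ≠ 0 := by exact_mod_cast (by omega : b ≠ 0)
  have h := irwinB_rec b d 1 hb hd
  have e : (fun y : ℝ => bernoulliFun 1 (1 - (d + 1 - y) / b)) =
      fun y => (1 / 2 - (d + 1) / b) + (b : ℝ)⁻¹ * y := by
    ext y; rw [bernoulliFun_one]; field_simp; ring
  rw [e, irwinL_add b d hb hd _ _ (by fun_prop) (by fun_prop), irwinL_const b d hb hd,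
    irwinL_smul, v_one b d hb hd, bernoulliFun_one, pow_one] at h
  have e2 : (b : ℝ)⁻¹ * ((1 / 2 - (d + 1) / b) * b + (b : ℝ)⁻¹ * (b / 2 + irwinB d 1 b))
      = 1 / 2 - (d + 1 / 2) * (b : ℝ)⁻¹ + irwinB d 1 b * ((b : ℝ)⁻¹) ^ 2 := by
    field_simp; ring
  rw [e2] at h
  linarith

lemma E_expand (d m : ℕ) : ∃ K, ∀ b : ℕ, 2 ≤ b → d < b →
    |irwinL b d (fun y => (1 - (d + 1 - y) / b) ^ m) -
      (b - m * (b : ℝ)⁻¹ * ((d + 1) * b - (b / 2 + irwinB d 1 b))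
        + m * (m - 1) / 2 * ((b : ℝ)⁻¹) ^ 2 * ((d + 1) ^ 2 * b
          - 2 * (d + 1) * (b / 2 + irwinB d 1 b)
          + (b / 3 + (irwinB d 1 b + irwinB d 2 b))))| ≤ K * ((b : ℝ)⁻¹) ^ 2 := by
  obtain ⟨K, hK, h⟩ := pow_taylor m
  refine ⟨K * (d + 1) ^ 3, fun b hb hd => ?_⟩
  have hb0 : (b : ℝ) ≠ 0 := by exact_mod_cast (by omega : b ≠ 0)
  have h1 := irwinL_bound b d hb hd
    (fun y => (1 - (d + 1 - y) / b) ^ m - (1 - m * ((d + 1 - y) / b)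
      + m * (m - 1) / 2 * ((d + 1 - y) / b) ^ 2)) (K * ((d + 1) / b) ^ 3)
    (fun y y0 y1 => by
      obtain ⟨t0, t1, t2⟩ := t_range b d hd y y0 y1
      exact (h _ t0 t1).trans (by gcongr))
  rw [irwinL_sub b d hb hd _ _ (by fun_prop) (by fun_prop)] at h1
  have e : (fun y : ℝ => (1 - m * ((d + 1 - y) / b)
      + m * (m - 1) / 2 * ((d + 1 - y) / b) ^ 2)) = fun y =>
      ((1 - m * (b : ℝ)⁻¹ * (d + 1) + m * (m - 1) / 2 * ((b : ℝ)⁻¹) ^ 2 * (d + 1) ^ 2)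
      + (m * (b : ℝ)⁻¹ - m * (m - 1) / 2 * ((b : ℝ)⁻¹) ^ 2 * (2 * (d + 1))) * y)
      + (m * (m - 1) / 2 * ((b : ℝ)⁻¹) ^ 2) * y ^ 2 := by
    ext y; field_simp; ring
  rw [e, irwinL_add b d hb hd _ _ (by fun_prop) (by fun_prop),
    irwinL_add b d hb hd _ _ (by fun_prop) (by fun_prop), irwinL_const b d hb hd,
    irwinL_smul, irwinL_smul, v_one b d hb hd, v_two b d hb hd] at h1
  refine le_trans (le_of_eq ?_) (h1.trans (le_of_eq ?_))
  · congr 2; ring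
  · field_simp

theorem momentV_zero_asymptotic (d m : ℕ) (hm : 1 ≤ m) :
    (fun b : ℕ => momentV b d 0 m -
      ((b : ℝ) / ((m : ℝ) + 1) + ((d : ℝ) + 1 / 2) * m / (b : ℝ)
        - (((d : ℝ) ^ 2 + d + 1 / 3) * ((m : ℝ) * ((m : ℝ) - 1)) / 2 - ((d : ℝ) + 1 / 2))
          / (b : ℝ) ^ 2))
      =O[atTop] fun b : ℕ => ((b : ℝ) ^ 3)⁻¹ := by
  have hev : ∀ᶠ b : ℕ in atTop, 2 ≤ b ∧ d < b :=
    (eventually_ge_atTop 2).and (eventually_gt_atTop d)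
  have hB : ∀ k, 1 ≤ k → (irwinB d k) =O[atTop] fun b : ℕ => (b : ℝ)⁻¹ := by
    intro k hk
    obtain ⟨C, hC⟩ := irwinB_bound d k hk
    refine IsBigO.of_bound C (hev.mono fun b hb => ?_)
    rw [Real.norm_eq_abs, Real.norm_of_nonneg (by positivity)]
    exact hC b hb.1 hb.2
  have hpow : ∀ i j : ℕ, i ≤ j → (fun b : ℕ => ((b : ℝ)⁻¹) ^ j) =O[atTop]
      fun b : ℕ => ((b : ℝ)⁻¹) ^ i := by
    intro i j hij
    refine IsBigO.of_bound 1 ((eventually_ge_atTop 1).mono fun b hb => ?_)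
    have hb1 : (1 : ℝ) ≤ b := by exact_mod_cast hb
    rw [one_mul, Real.norm_of_nonneg (by positivity), Real.norm_of_nonneg (by positivity)]
    exact pow_le_pow_of_le_one (by positivity) (inv_le_one_of_one_le₀ hb1) hij
  -- general term
  have hterm : ∀ (c : ℝ) (k j : ℕ), 1 ≤ k → 2 ≤ j →
      (fun b : ℕ => c * (((b : ℝ)⁻¹) ^ j * irwinB d k b)) =O[atTop]
        fun b : ℕ => ((b : ℝ)⁻¹) ^ 3 := by
    intro c k j hk hj
    refine IsBigO.const_mul_left ?_ c
    refine ((isBigO_refl (fun b : ℕ => ((b : ℝ)⁻¹) ^ j) atTop).mul (hB k hk)).trans ?_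
    simp_rw [← pow_succ]
    exact hpow 3 (j + 1) (by omega)
  obtain ⟨K, hK⟩ := E_expand d m
  set R : ℕ → ℝ := fun b => irwinL b d (fun y => (1 - (d + 1 - y) / b) ^ m) -
      (b - m * (b : ℝ)⁻¹ * ((d + 1) * b - (b / 2 + irwinB d 1 b))
        + m * (m - 1) / 2 * ((b : ℝ)⁻¹) ^ 2 * ((d + 1) ^ 2 * b
          - 2 * (d + 1) * (b / 2 + irwinB d 1 b)
          + (b / 3 + (irwinB d 1 b + irwinB d 2 b)))) with hR
  have hRO : (fun b : ℕ => (b : ℝ)⁻¹ * R b) =O[atTop] fun b : ℕ => ((b : ℝ)⁻¹) ^ 3 := by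
    have h1 : R =O[atTop] fun b : ℕ => ((b : ℝ)⁻¹) ^ 2 := by
      refine IsBigO.of_bound K (hev.mono fun b hb => ?_)
      rw [Real.norm_eq_abs, Real.norm_of_nonneg (by positivity)]
      exact hK b hb.1 hb.2
    refine ((isBigO_refl (fun b : ℕ => (b : ℝ)⁻¹) atTop).mul h1).congr_right fun b => ?_
    ring
  have hS : (fun b : ℕ => ∑ k ∈ Finset.Ico 2 (m + 1), ((m + 1).choose k / (m + 1) : ℝ) *
        (((b : ℝ)⁻¹) ^ k * irwinB d k b)) =O[atTop] fun b : ℕ => ((b : ℝ)⁻¹) ^ 3 := by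
    refine IsBigO.fun_sum fun k hk => ?_
    have := (Finset.mem_Ico.mp hk).1
    exact hterm _ k k (by omega) this
  have hall := ((((hS.add (hterm (1 - m) 1 2 le_rfl le_rfl)).sub
    (hterm 1 1 3 le_rfl (by norm_num))).add
    (hterm (m * (m - 1) / 2 * (2 * (d + 1) - 1)) 1 3 le_rfl (by norm_num))).sub
    (hterm (m * (m - 1) / 2) 2 3 (by norm_num) (by norm_num))).sub hRO
  refine IsBigO.congr' hall (hev.mono fun b hb => ?_) (Eventually.of_forall fun b => inv_pow _ _)
  obtain ⟨hb, hd⟩ := hb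
  have hb0 : (b : ℝ) ≠ 0 := by exact_mod_cast (by omega : b ≠ 0)
  have hm0 : ((m : ℝ) + 1) ≠ 0 := by positivity
  have h1 := moment_rec b d m hb hd
  have hE : irwinL b d (fun y => (1 - (d + 1 - y) / b) ^ m) = R b +
      (b - m * (b : ℝ)⁻¹ * ((d + 1) * b - (b / 2 + irwinB d 1 b))
        + m * (m - 1) / 2 * ((b : ℝ)⁻¹) ^ 2 * ((d + 1) ^ 2 * b
          - 2 * (d + 1) * (b / 2 + irwinB d 1 b)
          + (b / 3 + (irwinB d 1 b + irwinB d 2 b)))) := by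
    rw [hR]; ring
  rw [hE, Finset.range_eq_Ico, Finset.sum_eq_sum_Ico_succ_bot (by omega),
    Finset.sum_eq_sum_Ico_succ_bot (by omega), irwinB_zero b d hb hd] at h1
  have h2 := irwinB_one_rec b d hb hd
  beta_reduce
  rw [momentV_eq b d m hb, h1]
  simp only [zero_add, Nat.choose_zero_right, Nat.choose_one_right, inv_pow, Nat.reduceAdd]
  generalize (∑ k ∈ Finset.Ico 2 (m + 1), ((m + 1).choose k / (m + 1) : ℝ) *
        (((b : ℝ) ^ k)⁻¹ * irwinB d k b)) = S
  generalize R b = r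
  generalize irwinB d 2 b = β₂
  generalize irwinB d 1 b = β at *
  have h3 : β * (b : ℝ)⁻¹ = (d + 1 / 2) * ((b : ℝ)⁻¹) ^ 2 +
      (β * ((b : ℝ)⁻¹) ^ 2 - β * ((b : ℝ)⁻¹) ^ 3) := by
    linear_combination (b : ℝ)⁻¹ * h2
  push_cast
  have h4 : ((m : ℝ) + 1) / (m + 1) = 1 := div_self hm0
  rw [h4, pow_one, one_mul, mul_comm ((b : ℝ)⁻¹) β, h3]
  field_simp
  ring
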